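/- arXiv:1909.07967 — 3 statements merged into one kernel-verified Lean document; each statement's English description precedes it below -/
import Mathlib

section
/- Let p ≥ 14000 be a prime and let A ⊆ ℤ/pℤ be a sum-free set with |A| ≥ 0.313·p. Then there exists an integer m with 1 ≤ m ≤ p−1 such that m·A ⊆ {x ∈ ℤ/pℤ : |A| ≤ x̂ ≤ p − |A|}, where x̂ ∈ {0, 1, …, p−1} denotes the integer representative of x. -/
/-!
Write `n = |A|`, and let `T(r) = ∑ e(r a / p)`, summed over `a ∈ A`, be the Fourier transform of
`A`. The proof has three ingredients.

*A large coefficient.* Counting solutions of `x + y = z` in `A` gives `∑ |T(r)|² T(r) = 0`. Since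
`T(0) = n` and `∑ |T(r)|² = p n`, some `r ≠ 0` has `-Re T(r) ≥ n² / (p - n)` (`exists_neg_coeff`).
On the other hand, if every half of the group contains at most `N` points of `r • A`, then
`-Re T(r)` is at most the sum of the `2 N - n` largest numbers `cos (π j / p)`, `j ≥ 0`, the
discrete form of a lemma of Freiman and Lev (`neg_sum_cos_le`). For `n ≥ 0.313 p` the comparison
(`sum_cos_lt`) shows that some half of the group contains a set `F` of at least `(p - n + 4) / 3`
points of `r • A`.

*Rectification.* Shifted into `[0, p / 2)`, the set `F` becomes a set `B` of integers, and the
addition of two elements of `B` does not wrap around modulo `p`. As `A` is sum-free, `F + F` is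
disjoint from `r • A`, so `|B + B| ≤ p - n < 3 |B| - 3`. By Freiman's theorem
(`exists_progression`) `B + B` contains an arithmetic progression of length `2 |B| - 1`. After
dilation by the inverse of its difference, this progression is an interval of residues avoided by
the dilate of `A` (`rectify`). Thus a dilate of `A` lies in an interval of `p - 2 |F| + 1` residues,
and most of it lies in the first half of the group counted from the start of this interval; two
more rounds, the last with `F = A`, bring a dilate of `A` into an interval of `p - 2 n + 1`
residues.

*The middle interval.* Let `A` lie in such an interval and let `a` be the least absolute residue
of its elements. Since `A` and `A + a` are disjoint subsets of a slightly longer interval, `a` is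
larger than `p / 4`. All representatives lie in `[a, p - a]`, and identifying those that differ by
`a` maps `A` injectively into `[a, 2 a)`, so `n ≤ a` (`middle`).

The version of Freiman's theorem used here rests on `card_add_ge`, that a set of `k` integers in no
proper progression with diameter at least `2 k - 2` has at least `3 k - 3` sums, and on
`exists_interval`, which locates a long interval inside the sumset of a set of smaller diameter.
-/

namespace SumFree

/-! ### Long intervals in sumsets of dense sets of integers -/

section

open scoped Pointwise

/-- The number of elements of `B` not exceeding `x`, as an integer, so that the path
`2 * cnt B x - x - 1` below involves no truncated subtraction. -/
def cnt (B : Finset ℤ) (x : ℤ) : ℤ := ((B.filter (· ≤ x)).card : ℤ)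

lemma cnt_mono (B : Finset ℤ) {x y : ℤ} (h : x ≤ y) : cnt B x ≤ cnt B y := by
  unfold cnt
  exact_mod_cast Finset.card_le_card fun b hb => by
    simp only [Finset.mem_filter] at hb ⊢; exact ⟨hb.1, hb.2.trans h⟩

lemma cnt_add_le (B : Finset ℤ) {x y : ℤ} (h : x ≤ y) : cnt B y ≤ cnt B x + (y - x) := by
  unfold cnt
  have : B.filter (· ≤ y) ⊆ B.filter (· ≤ x) ∪ Finset.Ioc x y := by
    intro b hb
    simp only [Finset.mem_filter, Finset.mem_union, Finset.mem_Ioc] at hb ⊢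
    by_cases hx : b ≤ x
    · exact Or.inl ⟨hb.1, hx⟩
    · exact Or.inr ⟨by omega, hb.2⟩
  have h1 := (Finset.card_le_card this).trans (Finset.card_union_le _ _)
  rw [Int.card_Ioc] at h1
  omega

lemma cnt_of_mem (B : Finset ℤ) {x : ℤ} (h : x ∈ B) : cnt B x = cnt B (x - 1) + 1 := by
  unfold cnt
  have : B.filter (· ≤ x) = insert x (B.filter (· ≤ x - 1)) := by
    ext b
    simp only [Finset.mem_filter, Finset.mem_insert]
    constructor
    · rintro ⟨h1, h2⟩
      by_cases hb : b = x
      · exact Or.inl hb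
      · exact Or.inr ⟨h1, by omega⟩
    · rintro (rfl | ⟨h1, h2⟩)
      · exact ⟨h, le_rfl⟩
      · exact ⟨h1, by omega⟩
  rw [this, Finset.card_insert_of_notMem (by simp)]
  push_cast; rfl

lemma cnt_of_notMem (B : Finset ℤ) {x : ℤ} (h : x ∉ B) : cnt B x = cnt B (x - 1) := by
  unfold cnt
  congr 2
  ext b
  simp only [Finset.mem_filter]
  constructor
  · rintro ⟨h1, h2⟩
    have : b ≠ x := fun e => h (e ▸ h1)
    exact ⟨h1, by omega⟩
  · rintro ⟨h1, h2⟩; exact ⟨h1, by omega⟩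

lemma cnt_neg (B : Finset ℤ) {u x : ℤ} (hB : ∀ b ∈ B, u ≤ b) (hx : x < u) : cnt B x = 0 := by
  unfold cnt
  rw [Finset.filter_false_of_mem]; · rfl
  intro b hb; have := hB b hb; omega

lemma cnt_top (B : Finset ℤ) {v x : ℤ} (hB : ∀ b ∈ B, b ≤ v) (hx : v ≤ x) :
    cnt B x = B.card := by
  unfold cnt
  rw [Finset.filter_true_of_mem]
  intro b hb; have := hB b hb; omega

lemma cnt_add_gt (B : Finset ℤ) (x : ℤ) : cnt B x + ((B.filter (x < ·)).card : ℤ) = B.card := by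
  unfold cnt
  have := Finset.card_filter_add_card_filter_not (s := B) (p := (· ≤ x))
  simp only [not_le] at this
  exact_mod_cast this

/-- Pigeonhole: if `B ⊆ [0, ∞)` fills more than half of `[0, x]`, then `x` is a sum. -/
lemma mem_add_of_cnt (B : Finset ℤ) (hB : ∀ b ∈ B, 0 ≤ b) {x : ℤ} (hx0 : 0 ≤ x)
    (hx : x + 1 < 2 * cnt B x) : x ∈ B + B := by
  by_contra hcon
  set F := B.filter (· ≤ x) with hF
  have hd : Disjoint F (F.image (x - ·)) := by
    rw [Finset.disjoint_left]
    intro b hb hb'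
    obtain ⟨c, hc, rfl⟩ := Finset.mem_image.1 hb'
    apply hcon
    rw [Finset.mem_add]
    exact ⟨_, (Finset.mem_filter.1 hb).1, c, (Finset.mem_filter.1 hc).1, by ring⟩
  have hsub : F ∪ F.image (x - ·) ⊆ Finset.Icc 0 x := by
    intro b hb
    simp only [hF, Finset.mem_union, Finset.mem_filter, Finset.mem_image, Finset.mem_Icc] at hb ⊢
    rcases hb with ⟨h1, h2⟩ | ⟨c, ⟨h1, h2⟩, rfl⟩
    · exact ⟨hB _ h1, h2⟩
    · have := hB _ h1; omega
  have h1 := Finset.card_le_card hsub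
  rw [Finset.card_union_of_disjoint hd, Finset.card_image_of_injective _ sub_right_injective,
    Int.card_Icc] at h1
  unfold cnt at hx
  rw [← hF] at hx
  omega

/-- The reflected form of `mem_add_of_cnt`: if `B ⊆ [0, l]` fills more than half of `[z, l]`,
then `l + z` is a sum. -/
lemma add_mem_add_of_cnt (B : Finset ℤ) {l : ℤ} (hB : ∀ b ∈ B, b ≤ l) {z : ℤ} (hz : z ≤ l)
    (h : 2 * cnt B (z - 1) - z < 2 * B.card - l - 1) : l + z ∈ B + B := by
  have h1 := mem_add_of_cnt (B.image (l - ·)) (x := l - z) (by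
    intro b hb
    obtain ⟨c, hc, rfl⟩ := Finset.mem_image.1 hb
    have := hB c hc; omega) (by omega) (by
    have e : (B.image (l - ·)).filter (· ≤ l - z) = (B.filter (z - 1 < ·)).image (l - ·) := by
      ext b
      simp only [Finset.mem_filter, Finset.mem_image]
      constructor
      · rintro ⟨⟨c, hc, rfl⟩, h2⟩; exact ⟨c, ⟨hc, by omega⟩, rfl⟩
      · rintro ⟨c, ⟨hc, h2⟩, rfl⟩; exact ⟨⟨c, hc, rfl⟩, by omega⟩
    have h2 := cnt_add_gt B (z - 1)
    have h3 : cnt (B.image (l - ·)) (l - z) = ((B.filter (z - 1 < ·)).card : ℤ) := by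
      unfold cnt
      rw [e, Finset.card_image_of_injective _ sub_right_injective]
    omega)
  obtain ⟨a, ha, b, hb, hab⟩ := Finset.mem_add.1 h1
  obtain ⟨a', ha', rfl⟩ := Finset.mem_image.1 ha
  obtain ⟨b', hb', rfl⟩ := Finset.mem_image.1 hb
  exact Finset.mem_add.2 ⟨a', ha', b', hb', by omega⟩

/-- A discrete intermediate value property for the path `w ↦ 2 * cnt B w - w - 1`, whose steps
are `± 1` and which goes down exactly at the non-elements of `B`. -/
lemma exists_downstep (B : Finset ℤ) (j : ℤ) (z : ℤ) (hz : j < 2 * cnt B (z - 1) - z) (k : ℕ)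
    (hx : 2 * cnt B (z + k) - (z + k) - 1 ≤ j) :
    ∃ w, z ≤ w ∧ w ≤ z + k ∧ w ∉ B ∧ 2 * cnt B w - w - 1 = j := by
  induction k with
  | zero =>
    simp only [Nat.cast_zero, add_zero] at hx
    by_cases hm : z ∈ B
    · have := cnt_of_mem B hm; omega
    · have := cnt_of_notMem B hm
      exact ⟨z, le_rfl, by simp, hm, by omega⟩
  | succ k ih =>
    push_cast at hx ⊢
    by_cases h : 2 * cnt B (z + k) - (z + k) - 1 ≤ j
    · obtain ⟨w, h1, h2, h3⟩ := ih h
      exact ⟨w, h1, by omega, h3⟩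
    · have e : z + (k + 1) - 1 = z + (k : ℤ) := by ring
      by_cases hm : z + ((k : ℤ) + 1) ∈ B
      · have := cnt_of_mem B hm; rw [e] at this; omega
      · have := cnt_of_notMem B hm; rw [e] at this
        exact ⟨z + (k + 1), by omega, le_rfl, hm, by omega⟩

/-- If `B ⊆ [0, l]` has more than `(l + 2) / 2` elements, including both ends, and `B + B` is
small, then all the gaps of `B + B` in `[0, l]` lie to the left of all the translates by `-l` of
its gaps in `[l, 2 l]`. So `B + B` contains an interval `(X, l + Z)`. -/
lemma exists_interval (B : Finset ℤ) {l : ℤ} (h0 : 0 ∈ B) (hl : l ∈ B)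
    (hB : ∀ b ∈ B, 0 ≤ b ∧ b ≤ l) (hlen : l ≤ 2 * B.card - 3)
    (hsmall : ((B + B).card : ℤ) < 3 * B.card - 3) :
    ∃ X Z : ℤ, -1 ≤ X ∧ X < Z ∧ Z ≤ l + 1 ∧ 2 * cnt B X - X - 1 ≤ 0 ∧
      2 * (B.card : ℤ) - l - 1 ≤ 2 * cnt B (Z - 1) - Z ∧
      ∀ w, X < w → w < l + Z → w ∈ B + B := by
  classical
  have hl0 : 0 ≤ l := (hB l hl).1
  set P := (Finset.Icc 0 l).filter (· ∉ B + B) with hP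
  set Q := (Finset.Icc 0 l).filter (fun z => l + z ∉ B + B) with hQ
  have hPg : ∀ x ∈ P, 2 * cnt B x - x - 1 ≤ 0 := by
    intro x hx
    simp only [hP, Finset.mem_filter, Finset.mem_Icc] at hx
    by_contra hc
    exact hx.2 (mem_add_of_cnt B (fun b hb => (hB b hb).1) hx.1.1 (by omega))
  have hQg : ∀ z ∈ Q, 2 * (B.card : ℤ) - l - 1 ≤ 2 * cnt B (z - 1) - z := by
    intro z hz
    simp only [hQ, Finset.mem_filter, Finset.mem_Icc] at hz
    by_contra hc
    exact hz.2 (add_mem_add_of_cnt B (fun b hb => (hB b hb).2) hz.1.2 (by omega))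
  have hPB : ∀ x ∈ P, x ∉ B := fun x hx hxB => (Finset.mem_filter.1 hx).2
    (Finset.mem_add.2 ⟨0, h0, x, hxB, by ring⟩)
  have hQB : ∀ x ∈ Q, x ∉ B := fun x hx hxB => (Finset.mem_filter.1 hx).2
    (Finset.mem_add.2 ⟨l, hl, x, hxB, by ring⟩)
  have hPQ : ∀ x ∈ P, x ∉ Q := by
    intro x hx hx'
    have h1 := hPg x hx
    have h2 := hQg x hx'
    have h3 := cnt_mono B (show x - 1 ≤ x by omega)
    omega
  have hsep : ∀ x ∈ P, ∀ z ∈ Q, x < z := by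
    intro x hx z hz
    by_contra hlt
    push Not at hlt
    -- between `z` and `x` the path descends from level `2 |B| - l - 2` or higher to level `0`, and
    -- its descents to the intermediate levels end at elements of neither `B` nor `P` nor `Q`
    set E := (Finset.Icc 0 l).filter
      (fun w => w ∉ B ∧ 1 ≤ 2 * cnt B w - w - 1 ∧ 2 * cnt B w - w - 1 ≤ 2 * B.card - l - 3)
      with hE
    have hxI := Finset.mem_Icc.1 (Finset.mem_filter.1 hx).1
    have hzI := Finset.mem_Icc.1 (Finset.mem_filter.1 hz).1
    have hEcard : 2 * (B.card : ℤ) - l - 3 ≤ E.card := by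
      have hs : Finset.Icc 1 (2 * (B.card : ℤ) - l - 3) ⊆ E.image (fun w => 2 * cnt B w - w - 1) := by
        intro j hj
        rw [Finset.mem_Icc] at hj
        obtain ⟨k, hk⟩ := Int.eq_ofNat_of_zero_le (show 0 ≤ x - z by omega)
        have hxk : x = z + (k : ℤ) := by omega
        have h1 := hQg z hz
        have h2 := hPg x hx
        obtain ⟨w, hw1, hw2, hw3, hw4⟩ := exists_downstep B j z (by omega) k
          (by rw [← hxk]; omega)
        rw [Finset.mem_image]
        refine ⟨w, ?_, hw4⟩
        simp only [hE, Finset.mem_filter, Finset.mem_Icc]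
        exact ⟨⟨by omega, by omega⟩, hw3, by omega, by omega⟩
      have := (Finset.card_le_card hs).trans Finset.card_image_le
      rw [Int.card_Icc] at this
      omega
    have hEP : ∀ w ∈ E, w ∉ P ∧ w ∉ Q ∧ w ∉ B := by
      intro w hw
      simp only [hE, Finset.mem_filter] at hw
      refine ⟨fun h => ?_, fun h => ?_, hw.2.1⟩
      · have := hPg w h; omega
      · have := hQg w h
        have h2 := cnt_of_notMem B hw.2.1
        omega
    have hcount : B.card + P.card + Q.card + E.card ≤ (Finset.Icc 0 l).card := by
      rw [← Finset.card_union_of_disjoint (Finset.disjoint_left.2 fun b hb hb' => hPB b hb' hb),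
        ← Finset.card_union_of_disjoint, ← Finset.card_union_of_disjoint]
      · apply Finset.card_le_card
        intro b hb
        simp only [Finset.mem_union] at hb
        rcases hb with ((hb | hb) | hb) | hb
        · exact Finset.mem_Icc.2 (hB b hb)
        · exact (Finset.mem_filter.1 hb).1
        · exact (Finset.mem_filter.1 hb).1
        · exact (Finset.mem_filter.1 hb).1
      · rw [Finset.disjoint_right]
        intro w hw hw'
        simp only [Finset.mem_union] at hw'
        have := hEP w hw
        tauto
      · rw [Finset.disjoint_right]
        intro w hw hw'
        simp only [Finset.mem_union] at hw'
        rcases hw' with h | h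
        · exact hQB w hw h
        · exact hPQ w h hw
    have hlow : (Finset.Icc 0 l \ P).card + (Finset.Icc 0 l \ Q).card ≤ (B + B).card + 1 := by
      have e1 : ((Finset.Icc 0 l \ Q).image (l + ·)).card = (Finset.Icc 0 l \ Q).card :=
        Finset.card_image_of_injective _ (add_right_injective l)
      rw [← e1, ← Finset.card_union_add_card_inter]
      apply add_le_add
      · apply Finset.card_le_card
        intro w hw
        simp only [Finset.mem_union, Finset.mem_sdiff, Finset.mem_image] at hw
        rcases hw with ⟨h1, h2⟩ | ⟨c, ⟨h1, h2⟩, rfl⟩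
        · by_contra h; exact h2 (Finset.mem_filter.2 ⟨h1, h⟩)
        · by_contra h; exact h2 (Finset.mem_filter.2 ⟨h1, h⟩)
      · rw [Finset.card_le_one]
        intro a ha b hb
        simp only [Finset.mem_inter, Finset.mem_sdiff, Finset.mem_image, Finset.mem_Icc] at ha hb
        obtain ⟨⟨ha1, _⟩, c, ⟨hc, _⟩, hca⟩ := ha
        obtain ⟨⟨hb1, _⟩, d, ⟨hd, _⟩, hdb⟩ := hb
        omega
    have s1 : (Finset.Icc 0 l \ P).card + P.card = (Finset.Icc 0 l).card :=
      Finset.card_sdiff_add_card_eq_card (Finset.filter_subset _ _)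
    have s2 : (Finset.Icc 0 l \ Q).card + Q.card = (Finset.Icc 0 l).card :=
      Finset.card_sdiff_add_card_eq_card (Finset.filter_subset _ _)
    have s3 : (Finset.Icc 0 l).card = (l + 1 - 0).toNat := Int.card_Icc _ _
    omega
  have hX : ∃ X, -1 ≤ X ∧ (X = -1 ∨ X ∈ P) ∧ ∀ x ∈ P, x ≤ X := by
    rcases P.eq_empty_or_nonempty with he | hne
    · exact ⟨-1, le_rfl, Or.inl rfl, by simp [he]⟩
    · have hm := P.max'_mem hne
      have := (Finset.mem_Icc.1 (Finset.mem_filter.1 hm).1).1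
      exact ⟨P.max' hne, by omega, Or.inr hm, fun x hx => P.le_max' x hx⟩
  have hZ : ∃ Z, Z ≤ l + 1 ∧ (Z = l + 1 ∨ Z ∈ Q) ∧ ∀ z ∈ Q, Z ≤ z := by
    rcases Q.eq_empty_or_nonempty with he | hne
    · exact ⟨l + 1, le_rfl, Or.inl rfl, by simp [he]⟩
    · have hm := Q.min'_mem hne
      have := (Finset.mem_Icc.1 (Finset.mem_filter.1 hm).1).2
      exact ⟨Q.min' hne, by omega, Or.inr hm, fun x hx => Q.min'_le x hx⟩
  obtain ⟨X, hX1, hX2, hX3⟩ := hX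
  obtain ⟨Z, hZ1, hZ2, hZ3⟩ := hZ
  have hXl : X ≤ l := by
    rcases hX2 with h | h
    · omega
    · exact (Finset.mem_Icc.1 (Finset.mem_filter.1 h).1).2
  have hZ0 : 0 ≤ Z := by
    rcases hZ2 with h | h
    · omega
    · exact (Finset.mem_Icc.1 (Finset.mem_filter.1 h).1).1
  refine ⟨X, Z, hX1, ?_, hZ1, ?_, ?_, ?_⟩
  · rcases hX2 with h | h
    · omega
    · rcases hZ2 with h' | h'
      · omega
      · exact hsep X h Z h'
  · rcases hX2 with h | h
    · rw [h, cnt_neg B (fun b hb => (hB b hb).1) (by omega)]; norm_num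
    · exact hPg X h
  · rcases hZ2 with h | h
    · rw [h, cnt_top B (fun b hb => (hB b hb).2) (by omega)]; omega
    · exact hQg Z h
  · intro w hw1 hw2
    by_contra hc
    by_cases hwl : w ≤ l
    · have := hX3 w (Finset.mem_filter.2 ⟨Finset.mem_Icc.2 ⟨by omega, hwl⟩, hc⟩)
      omega
    · have := hZ3 (w - l) (Finset.mem_filter.2 ⟨Finset.mem_Icc.2 ⟨by omega, by omega⟩, by
        rwa [add_sub_cancel]⟩)
      omega

end

/-! ### Freiman's theorem -/

section

open scoped Pointwise

lemma image_sub_add_image_sub (B C : Finset ℤ) (u : ℤ) :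
    B.image (· - u) + C.image (· - u) = (B + C).image (· - 2 * u) := by
  ext x
  simp only [Finset.mem_add, Finset.mem_image]
  constructor
  · rintro ⟨_, ⟨a, ha, rfl⟩, _, ⟨b, hb, rfl⟩, rfl⟩
    exact ⟨a + b, ⟨a, ha, b, hb, rfl⟩, by ring⟩
  · rintro ⟨_, ⟨a, ha, b, hb, rfl⟩, rfl⟩
    exact ⟨a - u, ⟨a, ha, rfl⟩, b - u, ⟨b, hb, rfl⟩, by ring⟩

/-- If `B` is a dense subset of `[0, m]` with small sumset and `l` lies far to the right of `m`,
then `l + B` contributes many new elements to `B + B`. -/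
lemma card_add_union_zero (B : Finset ℤ) {m l : ℤ} (h0 : 0 ∈ B) (hm : m ∈ B)
    (hB : ∀ b ∈ B, 0 ≤ b ∧ b ≤ m) (hlen : m ≤ 2 * B.card - 3)
    (hsmall : ((B + B).card : ℤ) < 3 * B.card - 3) (hl : 2 * B.card ≤ l) :
    3 * (B.card : ℤ) - 1 ≤ ((B + B) ∪ B.image (l + ·)).card := by
  classical
  obtain ⟨X, Z, hX, hXZ, hZ, hgX, hgZ, hI⟩ := exists_interval B h0 hm hB hlen hsmall
  have hm0 : 0 ≤ m := (hB m hm).1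
  set e := l - m with he
  set S1 := B.filter (· ≤ X)
  set S2 := Finset.Ioo X (m + Z)
  set S3 := (B.filter (Z - e - 1 < ·)).image (l + ·)
  have hXm : X ≤ m := by omega
  have hd12 : Disjoint S1 S2 := by
    rw [Finset.disjoint_left]
    intro w hw hw'
    have := (Finset.mem_filter.1 hw).2
    have := (Finset.mem_Ioo.1 hw').1
    omega
  have hd3 : Disjoint (S1 ∪ S2) S3 := by
    rw [Finset.disjoint_left]
    intro w hw hw'
    obtain ⟨b, hb, rfl⟩ := Finset.mem_image.1 hw'
    have h1 := (Finset.mem_filter.1 hb).2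
    rcases Finset.mem_union.1 hw with h | h
    · have := (Finset.mem_filter.1 h).2
      omega
    · have := (Finset.mem_Ioo.1 h).2
      omega
  have hsub : S1 ∪ S2 ∪ S3 ⊆ (B + B) ∪ B.image (l + ·) := by
    intro w hw
    rw [Finset.mem_union, Finset.mem_union] at hw
    rcases hw with (h | h) | h
    · exact Finset.mem_union_left _ (Finset.mem_add.2
        ⟨0, h0, w, (Finset.mem_filter.1 h).1, by ring⟩)
    · rw [Finset.mem_Ioo] at h
      exact Finset.mem_union_left _ (hI w h.1 h.2)
    · exact Finset.mem_union_right _ (Finset.image_subset_image (Finset.filter_subset _ _) h)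
  have hc := Finset.card_le_card hsub
  rw [Finset.card_union_of_disjoint hd3, Finset.card_union_of_disjoint hd12] at hc
  have c3 : S3.card = (B.filter (Z - e - 1 < ·)).card :=
    Finset.card_image_of_injective _ (add_right_injective l)
  have c2 : S2.card = (m + Z - X - 1).toNat := Int.card_Ioo _ _
  have c1 : (S1.card : ℤ) = cnt B X := rfl
  have h4 := cnt_add_gt B (Z - e - 1)
  have h5 := cnt_add_le B (show X ≤ Z - 1 by omega)
  have h6 : cnt B (Z - e - 1) ≤ cnt B X + max 0 (Z - e - 1 - X) := by
    by_cases h : X ≤ Z - e - 1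
    · have := cnt_add_le B h; omega
    · have := cnt_mono B (show Z - e - 1 ≤ X by omega); omega
  omega

lemma card_add_union (B : Finset ℤ) {u m v : ℤ} (h0 : u ∈ B) (hm : m ∈ B)
    (hB : ∀ b ∈ B, u ≤ b ∧ b ≤ m) (hlen : m - u ≤ 2 * B.card - 3)
    (hsmall : ((B + B).card : ℤ) < 3 * B.card - 3) (hv : 2 * B.card ≤ v - u) :
    3 * (B.card : ℤ) - 1 ≤ ((B + B) ∪ B.image (v + ·)).card := by
  have hinj : ∀ c : ℤ, Function.Injective (· - c : ℤ → ℤ) := fun c => sub_left_injective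
  have key := card_add_union_zero (B.image (· - u)) (m := m - u) (l := v - u)
    (Finset.mem_image.2 ⟨u, h0, by ring⟩) (Finset.mem_image.2 ⟨m, hm, rfl⟩)
    (by
      intro b hb
      obtain ⟨c, hc, rfl⟩ := Finset.mem_image.1 hb
      have := hB c hc
      constructor <;> omega)
    (by rwa [Finset.card_image_of_injective _ (hinj u)])
    (by rwa [image_sub_add_image_sub, Finset.card_image_of_injective _ (hinj _),
      Finset.card_image_of_injective _ (hinj u)])
    (by rwa [Finset.card_image_of_injective _ (hinj u)])
  have e : (B.image (· - u)).image ((v - u) + ·) = (B.image (v + ·)).image (· - 2 * u) := by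
    rw [Finset.image_image, Finset.image_image]
    congr 1
    funext x
    simp only [Function.comp]
    ring
  rwa [e, image_sub_add_image_sub, ← Finset.image_union, Finset.card_image_of_injective _ (hinj u),
      Finset.card_image_of_injective _ (hinj _)] at key

/-- `B` has least element `u`, greatest element `v`, and is contained in no arithmetic progression
with difference other than `± 1`. -/
def IsNormalized (B : Finset ℤ) (u v : ℤ) : Prop :=
  u ∈ B ∧ v ∈ B ∧ (∀ b ∈ B, u ≤ b ∧ b ≤ v) ∧ ∀ d : ℤ, (∀ b ∈ B, d ∣ b - u) → IsUnit d

lemma IsNormalized.neg {B : Finset ℤ} {u v : ℤ} (h : IsNormalized B u v) :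
    IsNormalized (-B) (-v) (-u) := by
  obtain ⟨h1, h2, h3, h4⟩ := h
  refine ⟨Finset.neg_mem_neg h2, Finset.neg_mem_neg h1, ?_, ?_⟩
  · intro b hb
    have := h3 _ (Finset.mem_neg'.1 hb)
    constructor <;> omega
  · intro d hd
    refine h4 d fun b hb => ?_
    have e1 := hd (-b) (Finset.neg_mem_neg hb)
    have e2 := hd (-u) (Finset.neg_mem_neg h1)
    have := dvd_sub e2 e1
    have e : b - u = (-u - -v) - (-b - -v) := by ring
    rwa [e]

/-- In a minimal counterexample to `card_add_ge`, the greatest element has its predecessor in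
the set. -/
lemma pred_mem (n : ℕ)
    (IH : ∀ (B : Finset ℤ) (u v : ℤ), B.card = n → IsNormalized B u v →
      2 * (n : ℤ) - 2 ≤ v - u → 3 * (n : ℤ) - 3 ≤ ((B + B).card : ℤ))
    (B : Finset ℤ) (u v : ℤ) (hn : B.card = n + 1) (hN : IsNormalized B u v)
    (hlen : 2 * (n : ℤ) ≤ v - u) (hn1 : 1 ≤ n) (hsmall : ((B + B).card : ℤ) < 3 * n) :
    v - 1 ∈ B := by
  classical
  obtain ⟨hu, hv, hB, hg⟩ := hN
  set B' := B.erase v with hB'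
  have hc' : B'.card = n := by rw [hB', Finset.card_erase_of_mem hv, hn]; simp
  have huB' : u ∈ B' := Finset.mem_erase.2 ⟨by omega, hu⟩
  have hB'ne : B'.Nonempty := ⟨u, huB'⟩
  set m := B'.max' hB'ne with hm
  have hmB' : m ∈ B' := B'.max'_mem hB'ne
  have hle : ∀ b ∈ B', u ≤ b ∧ b ≤ m := fun b hb =>
    ⟨(hB b (Finset.mem_of_mem_erase hb)).1, B'.le_max' b hb⟩
  have hmv : m < v := by
    have h1 := (hB m (Finset.mem_of_mem_erase hmB')).2
    have h2 := Finset.ne_of_mem_erase hmB'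
    omega
  have hsub : (B' + B') ∪ B'.image (v + ·) ⊆ B + B := by
    apply Finset.union_subset
    · exact Finset.add_subset_add (Finset.erase_subset _ _) (Finset.erase_subset _ _)
    · intro w hw
      obtain ⟨b, hb, rfl⟩ := Finset.mem_image.1 hw
      exact Finset.mem_add.2 ⟨v, hv, b, Finset.mem_of_mem_erase hb, rfl⟩
  have hvv : v + v ∉ (B' + B') ∪ B'.image (v + ·) := by
    intro h
    rcases Finset.mem_union.1 h with h | h
    · obtain ⟨a, ha, b, hb, hab⟩ := Finset.mem_add.1 h
      have := (hle a ha).2; have := (hle b hb).2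
      omega
    · obtain ⟨b, hb, hab⟩ := Finset.mem_image.1 h
      have := (hle b hb).2
      omega
  have hcard : ((B' + B') ∪ B'.image (v + ·)).card + 1 ≤ (B + B).card := by
    rw [← Finset.card_insert_of_notMem hvv]
    exact Finset.card_le_card (Finset.insert_subset (Finset.add_mem_add hv hv) hsub)
  by_cases hbig : 3 * (n : ℤ) - 3 ≤ ((B' + B').card : ℤ)
  · -- besides `2 v` and `v + m` there is no new sum, which forces `v - m` to divide all differences
    have hold : ∀ b ∈ B', b ≠ m → v + b ∈ B' + B' := by
      intro b hb hbm
      by_contra hcon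
      have h1 : v + m ∉ B' + B' := by
        intro h
        obtain ⟨a, ha, b, hb, hab⟩ := Finset.mem_add.1 h
        have := (hle a ha).2; have := (hle b hb).2
        omega
      have h2 : v + m ∉ insert (v + b) (B' + B') := by
        rw [Finset.mem_insert]; rintro (h | h)
        · exact hbm (by omega)
        · exact h1 h
      have h3 : insert (v + m) (insert (v + b) (B' + B')) ⊆ (B' + B') ∪ B'.image (v + ·) := by
        refine Finset.insert_subset ?_ (Finset.insert_subset ?_ Finset.subset_union_left)
        · exact Finset.mem_union_right _ (Finset.mem_image.2 ⟨m, hmB', rfl⟩)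
        · exact Finset.mem_union_right _ (Finset.mem_image.2 ⟨b, hb, rfl⟩)
      have h4 := Finset.card_le_card h3
      rw [Finset.card_insert_of_notMem h2, Finset.card_insert_of_notMem hcon] at h4
      omega
    have hdvd : ∀ k : ℕ, ∀ b ∈ B, v - b ≤ k → v - m ∣ v - b := by
      intro k
      induction k using Nat.strong_induction_on with
      | _ k ihk =>
        intro b hb hbk
        by_cases hbv : b = v
        · simp [hbv]
        by_cases hbm : b = m
        · simp [hbm]
        have hbB' : b ∈ B' := Finset.mem_erase.2 ⟨hbv, hb⟩
        obtain ⟨x, hx, y, hy, hxy⟩ := Finset.mem_add.1 (hold b hbB' hbm)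
        have hx1 := (hle x hx).2
        have hy1 := (hle y hy).2
        have hb1 := (hle b hbB').2
        have e1 := ihk (k - 1) (by omega) x (Finset.mem_of_mem_erase hx) (by omega)
        have e2 := ihk (k - 1) (by omega) y (Finset.mem_of_mem_erase hy) (by omega)
        have e3 : v - b = (v - x) + (v - y) := by omega
        rw [e3]
        exact dvd_add e1 e2
    have hdv : ∀ b ∈ B, v - m ∣ v - b := fun b hb => hdvd (v - b).toNat b hb (by omega)
    have hunit := hg (v - m) fun b hb => by
      have e : b - u = (v - u) - (v - b) := by ring
      rw [e]
      exact dvd_sub (hdv u hu) (hdv b hb)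
    rcases Int.isUnit_iff.1 hunit with h | h
    · have : m = v - 1 := by omega
      exact this ▸ Finset.mem_of_mem_erase hmB'
    · omega
  · -- when `B'` itself has few sums, adding `v` creates too many new ones: `B'` is either dense and
    -- normalized, or contained in a progression that misses `v`
    push Not at hbig
    exfalso
    by_cases hg' : ∀ d : ℤ, (∀ b ∈ B', d ∣ b - u) → IsUnit d
    · by_cases hl' : 2 * (n : ℤ) - 2 ≤ m - u
      · have := IH B' u m hc' ⟨huB', hmB', hle, hg'⟩ hl'
        omega
      · have := card_add_union B' huB' hmB' hle (by omega) (by omega) (v := v) (by omega)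
        omega
    · push Not at hg'
      obtain ⟨d, hd, hdu⟩ := hg'
      have hdv : ¬ d ∣ v - u := fun h => hdu (hg d fun b hb => by
        by_cases hbv : b = v
        · rwa [hbv]
        · exact hd b (Finset.mem_erase.2 ⟨hbv, hb⟩))
      have hdisj : Disjoint (B' + B') (B'.image (v + ·)) := by
        rw [Finset.disjoint_left]
        intro w hw hw'
        obtain ⟨x, hx, y, hy, rfl⟩ := Finset.mem_add.1 hw
        obtain ⟨b, hb, hb'⟩ := Finset.mem_image.1 hw'
        apply hdv
        have e : v - u = ((x - u) + (y - u)) - (b - u) := by omega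
        rw [e]
        exact dvd_sub (dvd_add (hd x hx) (hd y hy)) (hd b hb)
      rw [Finset.card_union_of_disjoint hdisj,
        Finset.card_image_of_injective _ (add_right_injective v)] at hcard
      have := cauchy_davenport_add_of_linearOrder_isCancelAdd hB'ne hB'ne
      omega

/-- Freiman: if `B` is contained in no proper subprogression and its length is at least
`2 |B| - 2`, then `|B + B| ≥ 3 |B| - 3`. -/
theorem card_add_ge (n : ℕ) : ∀ (B : Finset ℤ) (u v : ℤ), B.card = n → IsNormalized B u v →
      2 * (n : ℤ) - 2 ≤ v - u → 3 * (n : ℤ) - 3 ≤ ((B + B).card : ℤ) := by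
  classical
  induction n using Nat.strong_induction_on with
  | _ n ih =>
    intro B u v hn hN hlen
    by_contra hsmall
    push Not at hsmall
    have hN' := hN
    obtain ⟨hu, hv, hB, hg⟩ := hN
    have hn1 : 2 ≤ n := by
      by_contra h
      have hle : B.card ≤ 1 := by omega
      have := Finset.card_le_one.1 hle
      have h0 := hg 0 fun b hb => by rw [this b hb u hu]; simp
      simp at h0
    obtain ⟨k, rfl⟩ : ∃ k, n = k + 1 := ⟨n - 1, by omega⟩
    push_cast at hlen hsmall
    have hv1 : v - 1 ∈ B := pred_mem k (fun C a b h1 h2 h3 => ih k (by omega) C a b h1 h2 h3)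
      B u v hn hN' (by omega) (by omega) (by omega)
    have hu1 : u + 1 ∈ B := by
      have := pred_mem k (fun C a b h1 h2 h3 => ih k (by omega) C a b h1 h2 h3)
        (-B) (-v) (-u) (by rwa [Finset.card_neg]) hN'.neg (by omega) (by omega) (by
          rw [← neg_add_rev, Finset.card_neg]; omega)
      rw [Finset.mem_neg'] at this
      convert this using 1; ring
    set g : ℤ → ℤ := fun w => 2 * cnt B w - (w - u) - 1 with hgdef
    have hgu : 2 ≤ g (u + 1) := by
      have h1 := cnt_of_mem B hu1
      have h2 := cnt_of_mem B hu
      have h3 := cnt_neg B (x := u - 1) (fun b hb => (hB b hb).1) (by omega)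
      rw [add_sub_cancel_right] at h1
      simp only [hgdef]
      omega
    have hgv : g v ≤ 1 := by
      have := cnt_top B (x := v) (fun b hb => (hB b hb).2) le_rfl
      simp only [hgdef]
      omega
    have hgv1 : g (v - 1) ≤ 0 := by
      have := cnt_top B (x := v) (fun b hb => (hB b hb).2) le_rfl
      have := cnt_of_mem B hv
      simp only [hgdef]
      omega
    -- `w` is the last element up to which `B` is dense, `w'` the element after it
    have hFne : (B.filter (fun w => 2 ≤ g w)).Nonempty := ⟨u + 1, Finset.mem_filter.2 ⟨hu1, hgu⟩⟩
    obtain ⟨w, hw, hwmax⟩ := Finset.exists_max_image _ id hFne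
    simp only [Finset.mem_filter, id] at hw hwmax
    obtain ⟨hwB, hgw⟩ := hw
    have hwu : u + 1 ≤ w := hwmax _ ⟨hu1, hgu⟩
    have hwv : w < v - 1 := by
      have h1 := (hB w hwB).2
      have h2 : w ≠ v := by rintro rfl; omega
      have h3 : w ≠ v - 1 := by rintro rfl; omega
      omega
    have hGne : (B.filter (w < ·)).Nonempty := ⟨v, Finset.mem_filter.2 ⟨hv, by omega⟩⟩
    obtain ⟨w', hw', hwmin⟩ := Finset.exists_min_image _ id hGne
    simp only [Finset.mem_filter, id] at hw' hwmin
    obtain ⟨hwB', hww'⟩ := hw'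
    have hw'v : w' ≤ v - 1 := hwmin _ ⟨hv1, by omega⟩
    have hgw' : g w' ≤ 1 := by
      by_contra h
      have := hwmax w' ⟨hwB', by omega⟩
      omega
    have hstep : cnt B w' = cnt B w + 1 := by
      rw [cnt_of_mem B hwB']
      congr 1
      unfold cnt
      congr 2
      ext b
      simp only [Finset.mem_filter]
      constructor
      · rintro ⟨h1, h2⟩
        refine ⟨h1, ?_⟩
        by_contra h
        have := hwmin b ⟨h1, by omega⟩
        omega
      · rintro ⟨h1, h2⟩; exact ⟨h1, by omega⟩
    have hcntw : 2 ≤ cnt B w := by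
      have h1 := cnt_mono B hwu
      simp only [hgdef] at hgu
      omega
    -- `B` is cut into two pieces overlapping in `{w, w'}`; both are long enough for induction, are
    -- normalized because each contains two consecutive integers, and their sumsets share at most
    -- the three sums `2 w`, `w + w'`, `2 w'`
    set C1 := B.filter (· ≤ w') with hC1
    set C2 := B.filter (w - 1 < ·) with hC2
    have hc1 : (C1.card : ℤ) = cnt B w + 1 := hstep
    have hc2 : (C2.card : ℤ) = B.card - cnt B w + 1 := by
      have h1 := cnt_add_gt B (w - 1)
      have h2 := cnt_of_mem B hwB
      rw [← hC2] at h1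
      omega
    have hcntw' : cnt B w' ≤ k := by
      have h1 := cnt_mono B hw'v
      have h2 := cnt_of_mem B hv
      have h3 := cnt_top B (x := v) (fun b hb => (hB b hb).2) le_rfl
      omega
    simp only [hgdef] at hgw hgw'
    have hT1 := ih C1.card (by omega) C1 u w' rfl
      ⟨Finset.mem_filter.2 ⟨hu, by omega⟩, Finset.mem_filter.2 ⟨hwB', le_rfl⟩,
        fun b hb => ⟨(hB b (Finset.mem_filter.1 hb).1).1, (Finset.mem_filter.1 hb).2⟩,
        fun d hd => by
          have := hd (u + 1) (Finset.mem_filter.2 ⟨hu1, by omega⟩)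
          rw [add_sub_cancel_left] at this
          exact isUnit_of_dvd_one this⟩ (by omega)
    have hT2 := ih C2.card (by omega) C2 w v rfl
      ⟨Finset.mem_filter.2 ⟨hwB, by omega⟩, Finset.mem_filter.2 ⟨hv, by omega⟩,
        fun b hb => ⟨by have := (Finset.mem_filter.1 hb).2; omega,
          (hB b (Finset.mem_filter.1 hb).1).2⟩,
        fun d hd => by
          have h1 := hd v (Finset.mem_filter.2 ⟨hv, by omega⟩)
          have h2 := hd (v - 1) (Finset.mem_filter.2 ⟨hv1, by omega⟩)
          have h3 := dvd_sub h1 h2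
          have e : v - w - (v - 1 - w) = 1 := by ring
          rw [e] at h3
          exact isUnit_of_dvd_one h3⟩ (by omega)
    have hinter : (C1 + C1) ∩ (C2 + C2) ⊆ {2 * w, w + w', 2 * w'} := by
      intro s hs
      obtain ⟨hs1, hs2⟩ := Finset.mem_inter.1 hs
      obtain ⟨x1, hx1, y1, hy1, rfl⟩ := Finset.mem_add.1 hs1
      obtain ⟨x2, hx2, y2, hy2, h⟩ := Finset.mem_add.1 hs2
      have k1 : ∀ x ∈ C1, x ≤ w ∨ x = w' := by
        intro x hx
        obtain ⟨h1, h2⟩ := Finset.mem_filter.1 hx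
        by_contra hc
        have := hwmin x ⟨h1, by omega⟩
        omega
      have k2 : ∀ x ∈ C2, x = w ∨ w' ≤ x := by
        intro x hx
        obtain ⟨h1, h2⟩ := Finset.mem_filter.1 hx
        by_contra hc
        have := hwmin x ⟨h1, by omega⟩
        omega
      simp only [Finset.mem_insert, Finset.mem_singleton]
      have := k1 x1 hx1
      have := k1 y1 hy1
      have := k2 x2 hx2
      have := k2 y2 hy2
      omega
    have hi3 := (Finset.card_le_card hinter).trans Finset.card_le_three
    have hun : (C1 + C1) ∪ (C2 + C2) ⊆ B + B := Finset.union_subset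
      (Finset.add_subset_add (Finset.filter_subset _ _) (Finset.filter_subset _ _))
      (Finset.add_subset_add (Finset.filter_subset _ _) (Finset.filter_subset _ _))
    have hun' := Finset.card_le_card hun
    have := Finset.card_union_add_card_inter (C1 + C1) (C2 + C2)
    omega

/-- A version of Freiman's `3k - 4` theorem: a set of `n` integers with fewer than `3 n - 3`
pairwise sums has an arithmetic progression of length `2 n - 1` in its sumset. It follows from
`card_add_ge` and `exists_interval`, applied to the image of `B` under the affine map that sends
its minimum to `0` and makes its differences coprime. -/
theorem exists_progression (B : Finset ℤ) {u v : ℤ} (hB : ∀ b ∈ B, u ≤ b ∧ b ≤ v)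
    (hn : 2 ≤ B.card) (hsmall : ((B + B).card : ℤ) < 3 * B.card - 3) :
    ∃ c d : ℤ, 0 < d ∧ d ≤ v - u ∧ ∀ j : ℤ, 0 ≤ j → j < 2 * B.card - 1 → c + d * j ∈ B + B := by
  classical
  have hne : B.Nonempty := Finset.card_pos.1 (by omega)
  set a := B.min' hne
  have ha : a ∈ B := B.min'_mem hne
  have hle : ∀ b ∈ B, a ≤ b := fun b hb => B.min'_le b hb
  set d := B.gcd (· - a) with hd
  have hdvd : ∀ b ∈ B, d ∣ b - a := fun b hb => Finset.gcd_dvd hb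
  obtain ⟨b₁, hb₁, hba⟩ : ∃ b ∈ B, b ≠ a := Finset.exists_mem_ne (by omega) a
  have hdne : d ≠ 0 := by
    intro h
    have := hdvd b₁ hb₁
    rw [h, zero_dvd_iff] at this
    omega
  have hd0 : 0 < d := by
    have h1 : normalize d = d := Finset.normalize_gcd
    have := Int.nonneg_of_normalize_eq_self h1
    omega
  have hdle : d ≤ v - u := by
    have h1 := Int.le_of_dvd (by have := hle b₁ hb₁; omega) (hdvd b₁ hb₁)
    have := hB b₁ hb₁
    have := hB a ha
    omega
  set B₀ := B.image (fun b => (b - a) / d) with hB₀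
  have hmul : ∀ b ∈ B, a + d * ((b - a) / d) = b := fun b hb => by
    rw [Int.mul_ediv_cancel' (hdvd b hb)]; ring
  have hinj : ∀ c : ℤ, Function.Injective (fun x : ℤ => c + d * x) := fun c x y hxy => by
    simpa [hdne] using hxy
  have himg : B₀.image (fun x => a + d * x) = B := by
    rw [hB₀, Finset.image_image]
    refine (Finset.image_congr fun b hb => ?_).trans Finset.image_id
    exact hmul b hb
  have hcard : B₀.card = B.card := by
    conv_rhs => rw [← himg]
    rw [Finset.card_image_of_injective _ (hinj a)]
  have hadd : (B₀ + B₀).image (fun x => 2 * a + d * x) = B + B := by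
    conv_rhs => rw [← himg]
    ext x
    simp only [Finset.mem_image, Finset.mem_add]
    constructor
    · rintro ⟨_, ⟨y, hy, z, hz, rfl⟩, rfl⟩
      exact ⟨_, ⟨y, hy, rfl⟩, _, ⟨z, hz, rfl⟩, by ring⟩
    · rintro ⟨_, ⟨y, hy, rfl⟩, _, ⟨z, hz, rfl⟩, rfl⟩
      exact ⟨_, ⟨y, hy, z, hz, rfl⟩, by ring⟩
  have hcard2 : (B₀ + B₀).card = (B + B).card := by
    rw [← hadd, Finset.card_image_of_injective _ (hinj (2 * a))]
  have hne₀ : B₀.Nonempty := hne.image _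
  have h0 : (0 : ℤ) ∈ B₀ := Finset.mem_image.2 ⟨a, ha, by simp⟩
  have hnn : ∀ x ∈ B₀, 0 ≤ x := by
    intro x hx
    obtain ⟨b, hb, rfl⟩ := Finset.mem_image.1 hx
    exact Int.ediv_nonneg (by have := hle b hb; omega) hd0.le
  set l := B₀.max' hne₀
  have hl : l ∈ B₀ := B₀.max'_mem hne₀
  have hbd : ∀ x ∈ B₀, 0 ≤ x ∧ x ≤ l := fun x hx => ⟨hnn x hx, B₀.le_max' x hx⟩
  have hnorm : IsNormalized B₀ 0 l := by
    refine ⟨h0, hl, hbd, fun e he => ?_⟩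
    have h1 : d * e ∣ d := by
      refine Finset.dvd_gcd fun b hb => ?_
      have h2 := he _ (Finset.mem_image.2 ⟨b, hb, rfl⟩)
      rw [sub_zero] at h2
      have h3 := mul_dvd_mul_left d h2
      rwa [Int.mul_ediv_cancel' (hdvd b hb)] at h3
    have h2 : d * e ∣ d * 1 := by rwa [mul_one]
    exact isUnit_of_dvd_one ((mul_dvd_mul_iff_left hdne).1 h2)
  have hlen : l ≤ 2 * B₀.card - 3 := by
    by_contra h
    have := card_add_ge B₀.card B₀ 0 l rfl hnorm (by omega)
    omega
  obtain ⟨X, Z, hX, hXZ, hZ, hgX, hgZ, hI⟩ := exists_interval B₀ h0 hl hbd hlen (by omega)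
  have hstep := cnt_add_le B₀ (show X ≤ Z - 1 by omega)
  refine ⟨2 * a + d * (X + 1), d, hd0, hdle, fun j hj0 hj => ?_⟩
  rw [← hadd, Finset.mem_image]
  exact ⟨X + 1 + j, hI _ (by omega) (by omega), by ring⟩

end

/-! ### Rectification of sum-free sets -/

section

open scoped Pointwise

/-- The rectification step. If a subset `F` of a sum-free set `A` lies, up to an affine map, in half
of the group and has at least `(p - |A| + 4) / 3` elements, then `F + F`, which is disjoint from
`A`, is small enough to contain a long progression. So a dilate of `A` misses an interval of
`2 |F| - 1` residues. -/
lemma rectify {p : ℕ} [Fact p.Prime] (A : Finset (ZMod p))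
    (hsf : ∀ x ∈ A, ∀ y ∈ A, ∀ z ∈ A, x + y ≠ z) (t c : ZMod p) (ht : t ≠ 0)
    (F : Finset (ZMod p)) (hFA : F ⊆ A) (hF : ∀ x ∈ F, 2 * (t * x - c).val + 1 ≤ p)
    (hF2 : 2 ≤ F.card) (hbig : p + 4 ≤ 3 * F.card + A.card) :
    ∃ t' c' : ZMod p, t' ≠ 0 ∧ ∀ x ∈ A, (t' * x - c').val + 2 * F.card ≤ p := by
  classical
  set B : Finset ℤ := F.image (fun x => ((t * x - c).val : ℤ)) with hB
  have hBcard : B.card = F.card := by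
    refine Finset.card_image_of_injective _ fun x y hxy => ?_
    have h1 := ZMod.val_injective p (Nat.cast_injective hxy)
    exact mul_left_cancel₀ ht (sub_left_injective h1)
  have hBbd : ∀ b ∈ B, 0 ≤ b ∧ b ≤ ((p : ℤ) - 1) / 2 := by
    intro b hb
    obtain ⟨x, hx, rfl⟩ := Finset.mem_image.1 hb
    have := hF x hx
    constructor <;> omega
  have hBB : ∀ s ∈ B + B, ∃ x ∈ F, ∃ y ∈ F, (s : ZMod p) + 2 * c = t * (x + y) := by
    intro s hs
    obtain ⟨b, hb, b', hb', rfl⟩ := Finset.mem_add.1 hs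
    obtain ⟨x, hx, rfl⟩ := Finset.mem_image.1 hb
    obtain ⟨y, hy, rfl⟩ := Finset.mem_image.1 hb'
    refine ⟨x, hx, y, hy, ?_⟩
    push_cast
    rw [ZMod.natCast_zmod_val, ZMod.natCast_zmod_val]
    ring
  have hBBA : ∀ s ∈ B + B, ∀ x ∈ A, (s : ZMod p) + 2 * c ≠ t * x := by
    intro s hs z hz h
    obtain ⟨x, hx, y, hy, hxy⟩ := hBB s hs
    exact hsf x (hFA hx) y (hFA hy) z hz (mul_left_cancel₀ ht (hxy.symm.trans h))
  have hsum : (B + B).card + A.card ≤ p := by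
    have hinj : Set.InjOn (fun s : ℤ => (s : ZMod p) + 2 * c) (B + B : Finset ℤ) := by
      intro s hs s' hs' h
      have h1 : (s : ZMod p) = s' := add_right_cancel h
      rw [ZMod.intCast_eq_intCast_iff] at h1
      obtain ⟨a, ha, b, hb, rfl⟩ := Finset.mem_add.1 (Finset.mem_coe.1 hs)
      obtain ⟨a', ha', b', hb', rfl⟩ := Finset.mem_add.1 (Finset.mem_coe.1 hs')
      have h1a := hBbd a ha
      have h1b := hBbd b hb
      have h1a' := hBbd a' ha'
      have h1b' := hBbd b' hb'
      have h2 := Int.emod_eq_of_lt (a := a + b) (b := p) (by omega) (by omega)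
      have h3 := Int.emod_eq_of_lt (a := a' + b') (b := p) (by omega) (by omega)
      rw [← h2, ← h3]; exact h1
    rw [← Finset.card_image_of_injOn hinj,
      ← Finset.card_image_of_injective A (mul_right_injective₀ ht),
      ← Finset.card_union_of_disjoint]
    · exact (Finset.card_le_univ _).trans (ZMod.card p).le
    · rw [Finset.disjoint_left]
      intro w hw hw'
      obtain ⟨s, hs, rfl⟩ := Finset.mem_image.1 hw
      obtain ⟨x, hx, h⟩ := Finset.mem_image.1 hw'
      exact hBBA s hs x hx h.symm
  obtain ⟨c₁, d, hd0, hdle, hj⟩ := exists_progression B hBbd (by omega) (by omega)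
  have hd : (d : ZMod p) ≠ 0 := by
    intro h
    rw [ZMod.intCast_zmod_eq_zero_iff_dvd] at h
    have := Int.le_of_dvd hd0 h
    omega
  refine ⟨(d : ZMod p)⁻¹ * t, (d : ZMod p)⁻¹ * (c₁ + 2 * c) + ((2 * F.card - 1 : ℕ) : ZMod p),
    mul_ne_zero (inv_ne_zero hd) ht, fun x hx => ?_⟩
  set y : ZMod p := (d : ZMod p)⁻¹ * (t * x - (c₁ + 2 * c)) with hy
  have hyval : 2 * F.card - 1 ≤ y.val := by
    by_contra h
    refine hBBA _ (hj y.val (by omega) (by omega)) x hx ?_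
    push_cast
    rw [ZMod.natCast_zmod_val, hy, mul_inv_cancel_left₀ hd]
    ring
  have e : (d : ZMod p)⁻¹ * t * x - ((d : ZMod p)⁻¹ * (c₁ + 2 * c) + ((2 * F.card - 1 : ℕ) : ZMod p))
      = ((y.val - (2 * F.card - 1) : ℕ) : ZMod p) := by
    rw [Nat.cast_sub hyval, ZMod.natCast_zmod_val, hy]
    ring
  have hyp := y.val_lt
  rw [e, ZMod.val_natCast_of_lt (by omega)]
  omega

/-- A sum-free set of `n ≥ (5 p + 5) / 16` residues contained in an interval of `p - 2 n + 1`
residues lies in the middle interval `[n, p - n]`. -/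
lemma middle {p : ℕ} [Fact p.Prime] (A : Finset (ZMod p))
    (hsf : ∀ x ∈ A, ∀ y ∈ A, ∀ z ∈ A, x + y ≠ z) (c : ZMod p)
    (hA : ∀ x ∈ A, (x - c).val + 2 * A.card ≤ p) (hbig : 5 * p + 5 ≤ 16 * A.card) :
    ∀ x ∈ A, A.card ≤ x.val ∧ x.val ≤ p - A.card := by
  classical
  -- `x` and `x ± a` are never both in `A`, as residues
  have hdiff : ∀ a ∈ A, ∀ s : ℕ, (s = a.val ∨ s = p - a.val) → ∀ x ∈ A, ∀ y ∈ A,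
      x + (s : ZMod p) ≠ y := by
    intro a ha s hs x hx y hy h
    rcases hs with rfl | rfl
    · rw [ZMod.natCast_zmod_val] at h
      exact hsf x hx a ha y hy h
    · rw [Nat.cast_sub a.val_lt.le, ZMod.natCast_self, ZMod.natCast_zmod_val] at h
      exact hsf y hy a ha x hx (by rw [← h]; ring)
  -- `A` and `A + s` are disjoint subsets of one interval of `p - 2 |A| + 1 + s` residues
  have hfar : ∀ a ∈ A, ∀ s : ℕ, (s = a.val ∨ s = p - a.val) → 4 * A.card ≤ p + 1 + s := by
    intro a ha s hs
    set V := A.image (fun x => (x - c).val) with hV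
    have hVc : V.card = A.card := Finset.card_image_of_injective _ fun x y hxy =>
      sub_left_injective (ZMod.val_injective p hxy)
    have hd : Disjoint V (V.image (· + s)) := by
      rw [Finset.disjoint_left]
      intro v hv hv'
      obtain ⟨x, hx, rfl⟩ := Finset.mem_image.1 hv
      obtain ⟨w, hw, hw'⟩ := Finset.mem_image.1 hv'
      obtain ⟨y, hy, rfl⟩ := Finset.mem_image.1 hw
      have h1 := congrArg (fun k : ℕ => (k : ZMod p)) hw'
      simp only [Nat.cast_add, ZMod.natCast_zmod_val] at h1
      exact hdiff a ha s hs y hy x hx (by linear_combination h1)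
    have hsub : V ∪ V.image (· + s) ⊆ Finset.range (p - 2 * A.card + s + 1) := by
      intro v hv
      rw [Finset.mem_range]
      rcases Finset.mem_union.1 hv with h | h
      · obtain ⟨x, hx, rfl⟩ := Finset.mem_image.1 h
        have := hA x hx
        omega
      · obtain ⟨w, hw, rfl⟩ := Finset.mem_image.1 h
        obtain ⟨x, hx, rfl⟩ := Finset.mem_image.1 hw
        have := hA x hx
        omega
    have h1 := Finset.card_le_card hsub
    rw [Finset.card_union_of_disjoint hd,
      Finset.card_image_of_injective _ (add_left_injective s), Finset.card_range, hVc] at h1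
    have := hA a ha
    omega
  rcases A.eq_empty_or_nonempty with he | hne
  · simp [he]
  obtain ⟨a₀, ha₀, hmin⟩ := A.exists_min_image (fun x => min x.val (p - x.val)) hne
  set a := min a₀.val (p - a₀.val) with ha
  have has : a = a₀.val ∨ a = p - a₀.val := by omega
  have hfa := hfar a₀ ha₀ a has
  have hrange : ∀ x ∈ A, a ≤ x.val ∧ x.val + a ≤ p := by
    intro x hx
    have := hmin x hx
    have := x.val_lt
    omega
  -- identify the residues that differ by `a`: at most one of each pair is in `A`
  have hcard : A.card ≤ a := by
    have hmaps : Set.MapsTo (fun x : ZMod p => if x.val < 2 * a then x.val else x.val - a) A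
        (Finset.Ico a (2 * a)) := by
      intro x hx
      have := hrange x hx
      simp only [Finset.coe_Ico, Set.mem_Ico]
      split_ifs <;> omega
    have hinj : Set.InjOn (fun x : ZMod p => if x.val < 2 * a then x.val else x.val - a) A := by
      intro x hx y hy hxy
      have hx' := hrange x hx
      have hy' := hrange y hy
      have key : ∀ x ∈ A, ∀ y ∈ A, x.val + a ≠ y.val := by
        intro x hx y hy h
        have h1 := congrArg (fun k : ℕ => (k : ZMod p)) h
        simp only [Nat.cast_add, ZMod.natCast_zmod_val] at h1
        exact hdiff a₀ ha₀ a has x hx y hy h1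
      have k1 := key x hx y hy
      have k2 := key y hy x hx
      simp only at hxy
      apply ZMod.val_injective p
      split_ifs at hxy <;> omega
    have := Finset.card_le_card_of_injOn _ hmaps hinj
    rw [Nat.card_Ico] at this
    omega
  intro x hx
  have := hrange x hx
  omega

/-- Once a dilate of `A` has `(p - |A| + 4) / 3` elements in half of the group, three applications
of `rectify` confine a dilate of `A` to the middle interval. -/
lemma conclude {p : ℕ} [Fact p.Prime] (hp : 14000 ≤ p) (A : Finset (ZMod p))
    (hsf : ∀ x ∈ A, ∀ y ∈ A, ∀ z ∈ A, x + y ≠ z) (hA : 313 * p ≤ 1000 * A.card)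
    (t c : ZMod p) (ht : t ≠ 0)
    (F : Finset (ZMod p)) (hFA : F ⊆ A) (hF : ∀ x ∈ F, 2 * (t * x - c).val + 1 ≤ p)
    (hbig : p + 4 ≤ 3 * F.card + A.card) :
    ∃ t' : ZMod p, t' ≠ 0 ∧ ∀ x ∈ A, A.card ≤ (t' * x).val ∧ (t' * x).val ≤ p - A.card := by
  classical
  have hAp : A.card ≤ p := (Finset.card_le_univ _).trans (ZMod.card p).le
  have hFA' := Finset.card_le_card hFA
  obtain ⟨t₁, c₁, ht₁, h₁⟩ := rectify A hsf t c ht F hFA hF (by omega) hbig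
  -- the part of `A` in the first half of the interval just found
  set F₁ := A.filter (fun x => 2 * (t₁ * x - c₁).val + 1 ≤ p) with hF₁
  have hcard : A.card ≤ F₁.card + (p - 2 * F.card - (p - 1) / 2) := by
    have e := Finset.card_filter_add_card_filter_not (s := A)
      (p := fun x => 2 * (t₁ * x - c₁).val + 1 ≤ p)
    rw [← hF₁] at e
    have : (A.filter (fun x => ¬ 2 * (t₁ * x - c₁).val + 1 ≤ p)).card ≤
        (Finset.Ioc ((p - 1) / 2) (p - 2 * F.card)).card := by
      refine Finset.card_le_card_of_injOn (fun x => (t₁ * x - c₁).val) ?_ ?_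
      · intro x hx
        have hx' := Finset.mem_filter.1 hx
        have := h₁ x hx'.1
        simp only [Finset.coe_Ioc, Set.mem_Ioc]
        omega
      · intro x _ y _ hxy
        exact mul_left_cancel₀ ht₁ (sub_left_injective (ZMod.val_injective p hxy))
    rw [Nat.card_Ioc] at this
    omega
  obtain ⟨t₂, c₂, ht₂, h₂⟩ := rectify A hsf t₁ c₁ ht₁ F₁ (Finset.filter_subset _ _)
    (fun x hx => (Finset.mem_filter.1 hx).2) (by omega) (by omega)
  obtain ⟨t₃, c₃, ht₃, h₃⟩ := rectify A hsf t₂ c₂ ht₂ A subset_rfl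
    (fun x hx => by have := h₂ x hx; omega) (by omega) (by omega)
  have hc : (A.image (t₃ * ·)).card = A.card :=
    Finset.card_image_of_injective _ (mul_right_injective₀ ht₃)
  refine ⟨t₃, ht₃, fun x hx => ?_⟩
  have := middle (A.image (t₃ * ·)) (by
      intro x hx y hy z hz h
      obtain ⟨x', hx', rfl⟩ := Finset.mem_image.1 hx
      obtain ⟨y', hy', rfl⟩ := Finset.mem_image.1 hy
      obtain ⟨z', hz', rfl⟩ := Finset.mem_image.1 hz
      exact hsf x' hx' y' hy' z' hz' (mul_left_cancel₀ ht₃ (by rw [mul_add]; exact h))) c₃ (by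
      intro x hx
      obtain ⟨x', hx', rfl⟩ := Finset.mem_image.1 hx
      rw [hc]
      exact h₃ x' hx') (by omega) (t₃ * x) (Finset.mem_image.2 ⟨x, hx, rfl⟩)
  rwa [hc] at this

end

/-! ### A large Fourier coefficient and a dense half of the group -/

/-- The identity `∑ |T(r)|² T(r) = 0` for the Fourier transform `T` of a sum-free set forces some
nontrivial coefficient to have a very negative real part. -/
lemma exists_neg_coeff {p : ℕ} [Fact p.Prime] (A : Finset (ZMod p))
    (hsf : ∀ x ∈ A, ∀ y ∈ A, ∀ z ∈ A, x + y ≠ z) (h0 : 0 < A.card) (hn : A.card < p) :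
    ∃ r : ZMod p, r ≠ 0 ∧ (A.card : ℝ) ^ 2 / (p - A.card) ≤
      -∑ x ∈ A, Real.cos (2 * Real.pi * ((r * x).val : ℝ) / p) := by
  classical
  set ψ : AddChar (ZMod p) ℂ := ZMod.stdAddChar with hψ
  set T : ZMod p → ℂ := fun r => ∑ x ∈ A, ψ (r * x) with hT
  have hneg : ∀ r, (starRingEnd ℂ) (T r) = ∑ x ∈ A, ψ (r * -x) := by
    intro r
    simp only [hT, map_sum, mul_neg, AddChar.map_neg_eq_conj]
  have horth : ∀ b : ZMod p, ∑ r, ψ (r * b) = if b = 0 then (p : ℂ) else 0 := by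
    intro b
    rw [AddChar.sum_mulShift b (ZMod.isPrimitive_stdAddChar p), ZMod.card]
    split_ifs <;> simp
  have hsq : ∀ r, T r * (starRingEnd ℂ) (T r) = ∑ x ∈ A, ∑ y ∈ A, ψ (r * (x - y)) := by
    intro r
    rw [hneg, Finset.sum_mul_sum]
    simp only [← AddChar.map_add_eq_mul, ← mul_add, ← sub_eq_add_neg]
  have hS2 : ∑ r, T r * (starRingEnd ℂ) (T r) = (p : ℂ) * A.card := by
    simp only [hsq]
    rw [Finset.sum_comm]
    have : ∀ x ∈ A, ∑ r, ∑ y ∈ A, ψ (r * (x - y)) = (p : ℂ) := by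
      intro x hx
      rw [Finset.sum_comm]
      simp only [horth, sub_eq_zero]
      rw [Finset.sum_ite_eq, if_pos hx]
    rw [Finset.sum_congr rfl this, Finset.sum_const, nsmul_eq_mul, mul_comm]
  have hS3 : ∑ r, T r * (starRingEnd ℂ) (T r) * T r = 0 := by
    have : ∀ r, T r * (starRingEnd ℂ) (T r) * T r =
        ∑ x ∈ A, ∑ y ∈ A, ∑ z ∈ A, ψ (r * (x - y + z)) := by
      intro r
      rw [hsq, Finset.sum_mul]
      refine Finset.sum_congr rfl fun x _ => ?_
      rw [Finset.sum_mul_sum]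
      simp only [← AddChar.map_add_eq_mul, ← mul_add]
    simp only [this]
    rw [Finset.sum_comm]
    refine Finset.sum_eq_zero fun x hx => ?_
    rw [Finset.sum_comm]
    refine Finset.sum_eq_zero fun y hy => ?_
    rw [Finset.sum_comm]
    refine Finset.sum_eq_zero fun z hz => ?_
    rw [horth, if_neg]
    intro h
    exact hsf x hx z hz y hy (by linear_combination h)
  have hre : ∀ r, (T r).re = ∑ x ∈ A, Real.cos (2 * Real.pi * ((r * x).val : ℝ) / p) := by
    intro r
    simp only [hT, Complex.re_sum]
    refine Finset.sum_congr rfl fun x _ => ?_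
    rw [hψ, ZMod.stdAddChar_apply, ZMod.toCircle_apply]
    have : (2 * Real.pi * Complex.I * ((r * x).val : ℂ) / (p : ℂ)) =
        ((2 * Real.pi * ((r * x).val : ℝ) / p : ℝ) : ℂ) * Complex.I := by
      push_cast; ring
    rw [this, Complex.exp_ofReal_mul_I_re]
  have hR2 : ∑ r, Complex.normSq (T r) = (p : ℝ) * A.card := by
    simp only [Complex.mul_conj] at hS2
    exact_mod_cast hS2
  have hR3 : ∑ r, Complex.normSq (T r) * (T r).re = 0 := by
    have := congrArg Complex.re hS3
    simpa [Complex.mul_conj] using this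
  have hT0 : T 0 = (A.card : ℂ) := by simp [hT]
  have hn' : (0 : ℝ) < p - A.card := by
    have : (A.card : ℝ) < p := by exact_mod_cast hn
    linarith
  have h0' : (0 : ℝ) < A.card := by exact_mod_cast h0
  by_contra! hcon
  set δ : ℝ := (A.card : ℝ) ^ 2 / (p - A.card) with hδ
  have hδ' : δ * (p - A.card) = (A.card : ℝ) ^ 2 := by
    rw [hδ]; field_simp
  rw [← Finset.add_sum_erase _ _ (Finset.mem_univ (0 : ZMod p))] at hR2 hR3
  simp only [hT0, Complex.normSq_natCast, Complex.natCast_re] at hR2 hR3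
  have hpos : 0 < ∑ r ∈ Finset.univ.erase (0 : ZMod p), Complex.normSq (T r) := by
    nlinarith
  have hterm : ∀ r ∈ Finset.univ.erase (0 : ZMod p), 0 < (T r).re + δ := by
    intro r hr
    have := hcon r (Finset.ne_of_mem_erase hr)
    rw [hre]; linarith
  have hzero : ∑ r ∈ Finset.univ.erase (0 : ZMod p), Complex.normSq (T r) * ((T r).re + δ) = 0 := by
    simp only [mul_add, Finset.sum_add_distrib, ← Finset.sum_mul]
    linear_combination hR3 + δ * hR2 + (A.card : ℝ) * hδ'
  rw [Finset.sum_eq_zero_iff_of_nonneg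
    fun r hr => mul_nonneg (Complex.normSq_nonneg _) (hterm r hr).le] at hzero
  refine hpos.ne' (Finset.sum_eq_zero fun r hr => ?_)
  exact (mul_eq_zero.1 (hzero r hr)).resolve_right (hterm r hr).ne'

/-- Telescoping form of the layer-cake formula. -/
lemma sum_layer (w : ℕ → ℝ) (s M : ℕ) :
    ∑ q ∈ Finset.range M, (if s ≤ q then w q - w (q + 1) else 0) =
      if s ≤ M then w s - w M else 0 := by
  induction M with
  | zero =>
    split_ifs with h
    · obtain rfl : s = 0 := by omega
      simp
    · simp
  | succ M ih =>
    rw [Finset.sum_range_succ, ih]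
    rcases lt_trichotomy s (M + 1) with h | h | h
    · rw [if_pos (by omega), if_pos (by omega), if_pos (by omega)]; ring
    · subst h
      simp
    · rw [if_neg (by omega), if_neg (by omega), if_neg (by omega)]; ring

/-- A set of `n` residues with at most `N` elements in each half of the group (here only
non-wrapping halves are needed) has `-Re ∑ e(a / p)` at most the sum of the `K` largest
possible values `cos (π j / p)`, `0 ≤ j < K`, where `K = 2 N - n`.
The increments `w q - w (q + 1)` of `w = max (cos (π · / p)) 0` weigh the
difference between the number of points within `q / 2` of `p / 2` and the number
within `q / 2` of `0`; two half-groups of suitable position show that this difference is at most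
`2 N - n`. -/
lemma neg_sum_cos_le {p : ℕ} (hp : p % 2 = 1) (S : Finset ℕ) (hS : ∀ a ∈ S, a < p) (N K : ℕ)
    (hN : ∀ u, (S.filter (fun a => u ≤ a ∧ a ≤ u + (p - 1) / 2)).card ≤ N)
    (hK : 2 * N ≤ K + S.card) (hKp : K ≤ p) :
    -∑ a ∈ S, Real.cos (2 * Real.pi * (a : ℝ) / p) ≤
      ∑ j ∈ Finset.range K, max (Real.cos (Real.pi * (j : ℝ) / p)) 0 := by
  classical
  have hp0 : (0 : ℝ) < p := by
    have : 0 < p := by omega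
    exact_mod_cast this
  have hpi := Real.pi_pos
  set w : ℕ → ℝ := fun j => max (Real.cos (Real.pi * (j : ℝ) / p)) 0 with hw
  have hw0 : ∀ j, 0 ≤ w j := fun j => le_max_right _ _
  set M := (p - 1) / 2 + 1 with hM
  have hwM : ∀ j, M ≤ j → j ≤ p → w j = 0 := by
    intro j hj hjp
    apply max_eq_right
    have h1 : (p : ℝ) ≤ 2 * j := by
      have : p ≤ 2 * j := by omega
      exact_mod_cast this
    have h2 : (j : ℝ) ≤ p := by exact_mod_cast hjp
    apply Real.cos_nonpos_of_pi_div_two_le_of_le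
    · rw [le_div_iff₀ hp0]; nlinarith
    · rw [div_le_iff₀ hp0]; nlinarith
  have hanti : ∀ q, q < M → w (q + 1) ≤ w q := by
    intro q hq
    apply max_le_max _ le_rfl
    apply Real.cos_le_cos_of_nonneg_of_le_pi
    · positivity
    · rw [div_le_iff₀ hp0]
      have : q + 1 ≤ p := by omega
      have : ((q + 1 : ℕ) : ℝ) ≤ p := by exact_mod_cast this
      nlinarith
    · push_cast
      gcongr
      linarith
  have hlayer : ∀ s, s ≤ p →
      w s = ∑ q ∈ Finset.range M, (if s ≤ q then w q - w (q + 1) else 0) := by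
    intro s hs
    rw [sum_layer]
    split_ifs with h
    · rw [hwM M le_rfl (by omega), sub_zero]
    · exact hwM s (by omega) hs
  -- both sides as sums over the levels `q`
  have hcos : ∀ a ∈ S, -Real.cos (2 * Real.pi * (a : ℝ) / p) =
      ∑ q ∈ Finset.range M, (w q - w (q + 1)) *
        ((if p ≤ 2 * a + q ∧ 2 * a ≤ p + q then 1 else 0) -
          (if 2 * a ≤ q ∨ 2 * p ≤ 2 * a + q then 1 else 0)) := by
    intro a ha
    have hap := hS a ha
    obtain ⟨s, hs, hs'⟩ : ∃ s, s ≤ p ∧ ((2 * a = p + s) ∨ (2 * a + s = p)) := by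
      rcases le_total p (2 * a) with h | h
      · exact ⟨2 * a - p, by omega, by omega⟩
      · exact ⟨p - 2 * a, by omega, by omega⟩
    have e1 : -Real.cos (2 * Real.pi * (a : ℝ) / p) = Real.cos (Real.pi * (s : ℝ) / p) := by
      rcases hs' with h | h
      · have h' : (2 : ℝ) * a = p + s := by exact_mod_cast h
        rw [← Real.cos_sub_pi]
        congr 1
        field_simp
        linarith
      · have h' : (2 : ℝ) * a + s = p := by exact_mod_cast h
        rw [← Real.cos_pi_sub]
        congr 1
        field_simp
        linarith
    have e2 : Real.cos (Real.pi * (s : ℝ) / p) = w s - w (p - s) := by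
      have : Real.cos (Real.pi * ((p - s : ℕ) : ℝ) / p) = -Real.cos (Real.pi * (s : ℝ) / p) := by
        rw [← Real.cos_pi_sub, Nat.cast_sub hs]
        congr 1
        field_simp
      simp only [hw, this]
      rcases le_total 0 (Real.cos (Real.pi * (s : ℝ) / p)) with h | h
      · rw [max_eq_left h, max_eq_right (by linarith)]; ring
      · rw [max_eq_right h, max_eq_left (by linarith)]; ring
    rw [e1, e2, hlayer s hs, hlayer (p - s) (by omega), ← Finset.sum_sub_distrib]
    refine Finset.sum_congr rfl fun q hq => ?_
    have i1 : (p ≤ 2 * a + q ∧ 2 * a ≤ p + q) ↔ s ≤ q := by omega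
    have i2 : (2 * a ≤ q ∨ 2 * p ≤ 2 * a + q) ↔ p - s ≤ q := by omega
    simp only [i1, i2]
    split_ifs <;> ring
  have hright : ∑ q ∈ Finset.range M, (w q - w (q + 1)) * (min (q + 1) K : ℕ) ≤
      ∑ j ∈ Finset.range K, w j := by
    have : ∀ j ∈ Finset.range K,
        w j = ∑ q ∈ Finset.range M, (if j ≤ q then w q - w (q + 1) else 0) :=
      fun j hj => hlayer j (by have := Finset.mem_range.1 hj; omega)
    rw [Finset.sum_congr rfl this, Finset.sum_comm]
    refine Finset.sum_le_sum fun q _ => le_of_eq ?_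
    rw [← Finset.sum_filter, Finset.sum_const, nsmul_eq_mul, mul_comm]
    congr 2
    rw [← Finset.card_range (min (q + 1) K)]
    congr 1
    ext j
    simp only [Finset.mem_range, Finset.mem_filter]
    omega
  rw [← Finset.sum_neg_distrib, Finset.sum_congr rfl hcos, Finset.sum_comm]
  refine le_trans (Finset.sum_le_sum fun q hq => ?_) hright
  have hq' := Finset.mem_range.1 hq
  rw [← Finset.mul_sum]
  refine mul_le_mul_of_nonneg_left ?_ (by linarith [hanti q hq'])
  rw [Finset.sum_sub_distrib, Finset.sum_boole, Finset.sum_boole]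
  -- the two half-groups overlapping in the points near `p / 2`
  have hH := hN ((p - q + 1) / 2)
  have hH' := hN (q / 2 + 1)
  have hcount : (S.filter fun a => p ≤ 2 * a + q ∧ 2 * a ≤ p + q).card + S.card ≤
      (S.filter fun a => 2 * a ≤ q ∨ 2 * p ≤ 2 * a + q).card + 
      ((S.filter fun a => (p - q + 1) / 2 ≤ a ∧ a ≤ (p - q + 1) / 2 + (p - 1) / 2).card +
      (S.filter fun a => q / 2 + 1 ≤ a ∧ a ≤ q / 2 + 1 + (p - 1) / 2).card) := by
    simp only [Finset.card_eq_sum_ones S, Finset.card_filter, ← Finset.sum_add_distrib]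
    refine Finset.sum_le_sum fun a ha => ?_
    have hap := hS a ha
    split_ifs <;> omega
  have hsmall : (S.filter fun a => p ≤ 2 * a + q ∧ 2 * a ≤ p + q).card ≤ q + 1 := by
    refine (Finset.card_le_card (t := Finset.Icc ((p - q + 1) / 2) ((p + q) / 2)) ?_).trans ?_
    · intro a ha
      have := Finset.mem_filter.1 ha
      rw [Finset.mem_Icc]
      omega
    · rw [Nat.card_Icc]; omega
  rw [sub_le_iff_le_add]
  norm_cast
  omega

lemma sum_range_sq_ge (K : ℕ) :
    (K : ℝ) ^ 3 / 3 - (K : ℝ) ^ 2 / 2 ≤ ∑ j ∈ Finset.range K, (j : ℝ) ^ 2 := by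
  induction K with
  | zero => simp
  | succ K ih =>
    rw [Finset.sum_range_succ]
    push_cast
    nlinarith [(Nat.cast_nonneg K : (0 : ℝ) ≤ K)]

/-- The constant `4.8` lies slightly below `π² / 2`. -/
lemma cos_le_quadratic {p j : ℕ} (hp : 0 < p) (hj : 1000 * j ≤ 146 * p) :
    Real.cos (Real.pi * (j : ℝ) / p) ≤ 1 - 4.8 * (j : ℝ) ^ 2 / p ^ 2 := by
  have hp0 : (0 : ℝ) < p := by exact_mod_cast hp
  have hj' : (1000 : ℝ) * j ≤ 146 * p := by exact_mod_cast hj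
  set y : ℝ := (j : ℝ) / p with hy
  have hy0 : 0 ≤ y := by positivity
  have hy1 : y ≤ 0.146 := by
    rw [hy, div_le_iff₀ hp0]; linarith
  have h1 := Real.pi_gt_d2
  have h2 := Real.pi_lt_d2
  have hx0 : 0 ≤ Real.pi * y := by positivity
  have hx1 : Real.pi * y ≤ 0.46 := by nlinarith
  have hb := (abs_le.1 (Real.cos_bound (x := Real.pi * y) (by rw [abs_of_nonneg hx0]; linarith))).2
  rw [abs_of_nonneg hx0] at hb
  have hsq : (Real.pi * y) ^ 2 ≤ 0.22 := by nlinarith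
  have h4 : (Real.pi * y) ^ 4 ≤ 0.22 * (Real.pi * y) ^ 2 := by
    nlinarith [sq_nonneg (Real.pi * y)]
  have hpi2 : 9.859 * y ^ 2 ≤ (Real.pi * y) ^ 2 := by
    rw [mul_pow]
    have : 9.859 ≤ Real.pi ^ 2 := by nlinarith
    nlinarith [sq_nonneg y]
  have e1 : Real.pi * (j : ℝ) / p = Real.pi * y := by rw [hy]; ring
  have e2 : 4.8 * (j : ℝ) ^ 2 / p ^ 2 = 4.8 * y ^ 2 := by rw [hy]; ring
  rw [e1, e2]
  nlinarith [sq_nonneg y]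

/-- The numerical comparison: for `n ≥ 0.313 p` the bound `n² / (p - n)` exceeds `0.1426 p`, while
`K ≤ 0.1452 p` and the `K` largest cosines add up to at most `0.1405 p + 1`. -/
lemma sum_cos_lt {p n K : ℕ} (hp : 14000 ≤ p) (hn : 313 * p ≤ 1000 * n) (hnp : n < p)
    (hK : 3 * K + 5 * n ≤ 2 * p + 6) :
    ∑ j ∈ Finset.range K, max (Real.cos (Real.pi * (j : ℝ) / p)) 0 <
      (n : ℝ) ^ 2 / (p - n) := by
  have hp0 : (14000 : ℝ) ≤ p := by exact_mod_cast hp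
  have hn' : (313 : ℝ) * p ≤ 1000 * n := by exact_mod_cast hn
  have hnp' : (n : ℝ) < p := by exact_mod_cast hnp
  have hK' : (3 : ℝ) * K + 5 * n ≤ 2 * p + 6 := by exact_mod_cast hK
  have hle : ∀ j ∈ Finset.range K, max (Real.cos (Real.pi * (j : ℝ) / p)) 0 ≤
      1 - 4.8 / (p : ℝ) ^ 2 * (j : ℝ) ^ 2 := by
    intro j hj
    have hj' : 1000 * j ≤ 146 * p := by have := Finset.mem_range.1 hj; omega
    have hj'' : (1000 : ℝ) * j ≤ 146 * p := by exact_mod_cast hj'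
    have e : 4.8 / (p : ℝ) ^ 2 * (j : ℝ) ^ 2 = 4.8 * (j : ℝ) ^ 2 / p ^ 2 := by ring
    rw [e]
    refine max_le (cos_le_quadratic (by omega) hj') ?_
    rw [sub_nonneg, div_le_one (by positivity)]
    nlinarith [(Nat.cast_nonneg j : (0 : ℝ) ≤ j)]
  have h1 := Finset.sum_le_sum hle
  rw [Finset.sum_sub_distrib, ← Finset.mul_sum, Finset.sum_const, Finset.card_range,
    nsmul_eq_mul, mul_one] at h1
  set z : ℝ := (K : ℝ) / p with hz
  have hKz : (K : ℝ) = z * p := by rw [hz]; field_simp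
  have hz0 : 0 ≤ z := by positivity
  have hz1 : z ≤ 0.1452 := by
    rw [hz, div_le_iff₀ (by linarith)]; linarith
  have h2 : 4.8 / (p : ℝ) ^ 2 * ((K : ℝ) ^ 3 / 3 - (K : ℝ) ^ 2 / 2) ≤
      4.8 / (p : ℝ) ^ 2 * ∑ j ∈ Finset.range K, (j : ℝ) ^ 2 :=
    mul_le_mul_of_nonneg_left (sum_range_sq_ge K) (by positivity)
  have h3 : 4.8 / (p : ℝ) ^ 2 * ((K : ℝ) ^ 3 / 3 - (K : ℝ) ^ 2 / 2) =
      1.6 * z ^ 3 * p - 2.4 * z ^ 2 := by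
    rw [hKz]; field_simp; ring
  have hz2 : z ^ 2 ≤ 0.0212 := by nlinarith
  -- tangent line of the convex function `z ^ 3` at `0.145`
  have hz3 : 3 * 0.145 ^ 2 * z - 2 * 0.145 ^ 3 ≤ z ^ 3 := by
    nlinarith [mul_nonneg (by linarith : (0 : ℝ) ≤ z + 2 * 0.145) (sq_nonneg (z - 0.145))]
  have h4 : z - 1.6 * z ^ 3 ≤ 0.1405 := by nlinarith
  have h5 : 0.1426 * (p : ℝ) ≤ (n : ℝ) ^ 2 / (p - n) := by
    rw [le_div_iff₀ (by linarith)]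
    nlinarith
  nlinarith

end SumFree

/-! ### Conclusion -/

theorem stmt12 (p : ℕ) (hp : p.Prime) (hp' : 14000 ≤ p)
    (A : Finset (ZMod p))
    (hsf : ∀ x ∈ A, ∀ y ∈ A, ∀ z ∈ A, x + y ≠ z)
    (hAcard : (0.313 : ℝ) * p ≤ A.card) :
    ∃ m : ℕ, 1 ≤ m ∧ m ≤ p - 1 ∧
      ∀ x ∈ A, A.card ≤ (m • x).val ∧ (m • x).val ≤ p - A.card := by
  classical
  have : Fact p.Prime := ⟨hp⟩
  have hA : 313 * p ≤ 1000 * A.card := by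
    have : (313 : ℝ) * p ≤ 1000 * A.card := by linarith
    exact_mod_cast this
  have h0 : (0 : ZMod p) ∉ A := fun h => hsf 0 h 0 h 0 h (add_zero 0)
  have hn : A.card < p := by
    have := Finset.card_lt_univ_of_notMem h0
    rwa [ZMod.card] at this
  suffices ∃ t' : ZMod p, t' ≠ 0 ∧
      ∀ x ∈ A, A.card ≤ (t' * x).val ∧ (t' * x).val ≤ p - A.card by
    obtain ⟨t, ht, h⟩ := this
    have h1 : t.val ≠ 0 := by rwa [Ne, ZMod.val_eq_zero]
    have h2 := ZMod.val_lt t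
    refine ⟨t.val, by omega, by omega, fun x hx => ?_⟩
    rw [nsmul_eq_mul, ZMod.natCast_zmod_val]
    exact h x hx
  obtain ⟨r, hr, hsum⟩ := SumFree.exists_neg_coeff A hsf (by omega) hn
  have hinj : Set.InjOn (fun x : ZMod p => (r * x).val) A := fun x _ y _ hxy =>
    mul_left_cancel₀ hr (ZMod.val_injective p hxy)
  set S : Finset ℕ := A.image (fun x => (r * x).val) with hS
  have hScard : S.card = A.card := Finset.card_image_of_injOn hinj
  -- some half of the group meets `r • A` in at least `(p - |A| + 4) / 3` points
  obtain ⟨u, hu⟩ : ∃ u : ℕ, p + 4 ≤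
      3 * (S.filter (fun a => u ≤ a ∧ a ≤ u + (p - 1) / 2)).card + A.card := by
    by_contra! hcon
    have hodd : p % 2 = 1 := hp.eq_two_or_odd.resolve_left (by omega)
    have hle := SumFree.neg_sum_cos_le hodd S
      (fun a ha => by
        obtain ⟨x, -, rfl⟩ := Finset.mem_image.1 ha
        exact ZMod.val_lt _)
      ((p - A.card + 3) / 3) (2 * ((p - A.card + 3) / 3) - A.card)
      (fun u => by have := hcon u; omega) (by omega) (by omega)
    rw [hS, Finset.sum_image hinj] at hle
    rcases Nat.lt_or_ge (2 * ((p - A.card + 3) / 3)) A.card with hK | hK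
    · rw [Nat.sub_eq_zero_of_le hK.le, Finset.sum_range_zero] at hle
      have : (0 : ℝ) < (A.card : ℝ) ^ 2 / (p - A.card) := by
        have h1 : (A.card : ℝ) < p := by exact_mod_cast hn
        have h2 : (0 : ℝ) < A.card := by
          have : 0 < A.card := by omega
          exact_mod_cast this
        exact div_pos (by positivity) (by linarith)
      linarith
    · exact absurd (SumFree.sum_cos_lt hp' hA hn
        (K := 2 * ((p - A.card + 3) / 3) - A.card) (by omega)) (not_lt.2 (hsum.trans hle))
  have hFc : (A.filter (fun x => u ≤ (r * x).val ∧ (r * x).val ≤ u + (p - 1) / 2)).card =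
      (S.filter (fun a => u ≤ a ∧ a ≤ u + (p - 1) / 2)).card := by
    rw [hS, Finset.filter_image, Finset.card_image_of_injOn]
    exact hinj.mono (Finset.coe_subset.2 (Finset.filter_subset _ _))
  refine SumFree.conclude hp' A hsf hA r (u : ZMod p) hr
    (A.filter (fun x => u ≤ (r * x).val ∧ (r * x).val ≤ u + (p - 1) / 2))
    (Finset.filter_subset _ _) (fun x hx => ?_) (by rwa [hFc])
  obtain ⟨-, h1, h2⟩ := Finset.mem_filter.1 hx
  have hval : (r * x - (u : ZMod p)).val = (r * x).val - u := by
    have h3 : r * x - (u : ZMod p) = (((r * x).val - u : ℕ) : ZMod p) := by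
      rw [Nat.cast_sub h1, ZMod.natCast_zmod_val]
    rw [h3, ZMod.val_natCast_of_lt]
    have := ZMod.val_lt (r * x)
    omega
  rw [hval]
  omega
end

section
/- Let m ≥ 3 be an integer and let p be a prime. Let A be the image in ℤ/pℤ of the set of integers {x : 2p/(m²−4) < x < mp/(m²−4)}. Then A is m-sum-free and |A| ≥ p/(m+2) − 1. -/
/-!
Write `D = m² - 4 > 0`. For integers `x, y, z` in the open interval `(2p/D, mp/D)`, the sum `x + y`
is below `2mp/D` while `m z` lies strictly between `2mp/D` and `m²p/D`, and `x + y > 4p/D`. Hence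
`0 < m z - (x + y) < (m² - 4)p/D = p`, so `m z` and `x + y` are not congruent modulo `p`.
The interval has length `(m - 2)p/D = p/(m + 2) < p`, so its integers stay distinct modulo `p`, and
an open interval of length `ℓ` contains at least `ℓ - 1` integers.
-/

/-- An integer strictly between `0` and `p` is nonzero modulo `p`. -/
lemma intCast_zmod_ne_zero_of_pos_of_lt {p : ℕ} {d : ℤ} (h0 : 0 < d) (h1 : d < p) :
    (d : ZMod p) ≠ 0 := by
  rw [Ne, ZMod.intCast_zmod_eq_zero_iff_dvd]
  intro h
  exact absurd (Int.le_of_dvd h0 h) (by omega)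

theorem stmt13 (m : ℕ) (hm : 3 ≤ m) (p : ℕ) (hp : p.Prime)
    (A : Set (ZMod p))
    (hAdef : A = (fun x : ℤ => (x : ZMod p)) ''
      {x : ℤ | 2 * (p : ℝ) / ((m : ℝ) ^ 2 - 4) < (x : ℝ) ∧
               (x : ℝ) < (m : ℝ) * p / ((m : ℝ) ^ 2 - 4)}) :
    (∀ x ∈ A, ∀ y ∈ A, ∀ z ∈ A, x + y ≠ m • z) ∧
    (p : ℝ) / (m + 2) - 1 ≤ A.ncard := by
  have hm' : (3 : ℝ) ≤ m := by exact_mod_cast hm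
  have hp' : (0 : ℝ) < p := by exact_mod_cast hp.pos
  have hD : (0 : ℝ) < (m : ℝ) ^ 2 - 4 := by nlinarith
  set a : ℝ := 2 * (p : ℝ) / ((m : ℝ) ^ 2 - 4) with ha
  set b : ℝ := (m : ℝ) * p / ((m : ℝ) ^ 2 - 4) with hb
  have hma : (m : ℝ) * a = 2 * b := by rw [ha, hb]; ring
  have hmb : (m : ℝ) * b - 2 * a = p := by rw [ha, hb]; field_simp; norm_num
  have hlen : b - a = p / (m + 2) := by
    rw [eq_div_iff (by positivity)]
    linarith
  have hlt : b - a < p := by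
    rw [hlen]
    exact div_lt_self hp' (by linarith)
  subst hAdef
  constructor
  · rintro _ ⟨x, ⟨hx1, hx2⟩, rfl⟩ _ ⟨y, ⟨hy1, hy2⟩, rfl⟩ _ ⟨z, ⟨hz1, hz2⟩, rfl⟩ h
    have h1 : (m : ℝ) * a < m * z := by gcongr
    have h2 : (m : ℝ) * z < m * b := by gcongr
    have h0 : 0 < (m : ℤ) * z - (x + y) := by
      have : (0 : ℝ) < m * z - (x + y) := by linarith
      exact_mod_cast this
    have hlt' : (m : ℤ) * z - (x + y) < p := by
      have : (m : ℝ) * z - (x + y) < p := by linarith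
      exact_mod_cast this
    refine intCast_zmod_ne_zero_of_pos_of_lt h0 hlt' ?_
    push_cast
    rw [sub_eq_zero, ← nsmul_eq_mul]
    exact h.symm
  · have hinj : Set.InjOn (fun x : ℤ => (x : ZMod p)) {x : ℤ | a < (x : ℝ) ∧ (x : ℝ) < b} := by
      -- Two integers of the interval, in increasing order, differ by less than `p`.
      have key : ∀ x y : ℤ, a < (x : ℝ) → (y : ℝ) < b → x < y → (x : ZMod p) ≠ y := by
        intro x y hx hy hxy h
        have h1 : y - x < p := by
          have : (y : ℝ) - x < p := by linarith
          exact_mod_cast this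
        refine intCast_zmod_ne_zero_of_pos_of_lt (sub_pos.2 hxy) h1 ?_
        push_cast
        rw [h, sub_self]
      rintro x ⟨hx1, hx2⟩ y ⟨hy1, hy2⟩ h
      rcases lt_trichotomy x y with hxy | hxy | hxy
      · exact absurd h (key x y hx1 hy2 hxy)
      · exact hxy
      · exact absurd h.symm (key y x hy1 hx2 hxy)
    have hS : {x : ℤ | a < (x : ℝ) ∧ (x : ℝ) < b} = (Finset.Ioo ⌊a⌋ ⌈b⌉ : Finset ℤ) := by
      ext x
      simp [Int.floor_lt, Int.lt_ceil]
    rw [hinj.ncard_image, hS, Set.ncard_coe_finset, Int.card_Ioo, ← hlen]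
    have h1 : ((⌈b⌉ - ⌊a⌋ - 1 : ℤ) : ℝ) ≤ ((⌈b⌉ - ⌊a⌋ - 1).toNat : ℝ) := by
      exact_mod_cast Int.self_le_toNat _
    push_cast at h1
    linarith [Int.le_ceil b, Int.floor_le a]
end

section
/- Let p be a prime, let m be a positive integer not divisible by p, and let A ⊆ ℤ/pℤ be a nonempty m-sum-free set. Then |A| ≤ (p+1)/3. -/
open scoped Pointwise in
theorem stmt14 (p : ℕ) (hp : p.Prime) (m : ℕ) (hm : 0 < m) (hpm : ¬ p ∣ m)
    (A : Finset (ZMod p)) (hA : A.Nonempty)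
    (hsf : ∀ x ∈ A, ∀ y ∈ A, ∀ z ∈ A, x + y ≠ m • z) :
    (A.card : ℝ) ≤ ((p : ℝ) + 1) / 3 := by
  haveI : Fact p.Prime := ⟨hp⟩
  have hm0 : (m : ZMod p) ≠ 0 := by rwa [Ne, ZMod.natCast_eq_zero_iff]
  have hinj : Function.Injective fun z : ZMod p => m • z := by
    intro a b h
    simpa [nsmul_eq_mul, hm0] using h
  -- `A + A` and the dilate `m • A` are disjoint, and the dilate has `#A` elements, so
  -- `#(A + A) ≤ p - #A`; Cauchy–Davenport bounds `#(A + A)` from below.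
  have hdisj : Disjoint (A + A) (A.image fun z => m • z) := by
    rw [Finset.disjoint_left]
    intro w hw hw'
    obtain ⟨x, hx, y, hy, rfl⟩ := Finset.mem_add.mp hw
    obtain ⟨z, hz, h⟩ := Finset.mem_image.mp hw'
    exact hsf x hx y hy z hz h.symm
  have hle := Finset.card_le_univ ((A + A) ∪ A.image fun z => m • z)
  rw [Finset.card_union_of_disjoint hdisj, Finset.card_image_of_injective A hinj,
    ZMod.card] at hle
  have hcd := ZMod.cauchy_davenport hp hA hA
  have hpos := hA.card_pos
  have key : 3 * A.card ≤ p + 1 := by omega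
  have key' : 3 * (A.card : ℝ) ≤ p + 1 := by exact_mod_cast key
  linarith
end
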